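/- arXiv:2507.16024 — 9 statements merged into one kernel-verified Lean document; each statement's English description precedes it below -/
import Mathlib

section
/- For every λ ∈ ℂ one has λ^{n−r} · det S(λ) = (−1)^r · det P(λ). Consequently Λ(S) \ {0} = Λ(P) \ {0}. -/
open Matrix ComplexOrder

/-- For every `λ ∈ ℂ` one has `λ^(n-r) * det S(λ) = (-1)^r * det P(λ)`; consequently
`Λ(S) \ {0} = Λ(P) \ {0}`. -/
theorem stmt0 {n r : ℕ} (hn : 0 < n) (hr : 0 < r) (hrn : r ≤ n)
    (M D : Matrix (Fin n) (Fin n) ℂ) (hM : M.PosDef) (hD : D.PosSemidef)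
    (G : Matrix (Fin n) (Fin r) ℂ) (hG : G.rank = r)
    (P : ℂ → Matrix (Fin n) (Fin n) ℂ)
    (hP : ∀ z : ℂ, P z = z ^ 2 • M + z • D + G * Gᴴ)
    (S : ℂ → Matrix (Fin n ⊕ Fin r) (Fin n ⊕ Fin r) ℂ)
    (hS : ∀ z : ℂ, S z = z • Matrix.fromBlocks M 0 0 (-1) + Matrix.fromBlocks D G Gᴴ 0) :
    (∀ z : ℂ, z ^ (n - r) * (S z).det = (-1 : ℂ) ^ r * (P z).det) ∧
      {z : ℂ | (S z).det = 0} \ {0} = {z : ℂ | (P z).det = 0} \ {0} := by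
  have key : ∀ z : ℂ, (S z).det * z ^ n = (P z).det * (-z) ^ r := by
    intro z
    have h : S z * Matrix.fromBlocks (z • (1 : Matrix (Fin n) (Fin n) ℂ)) 0 Gᴴ 1
        = Matrix.fromBlocks (P z) G 0 ((-z) • (1 : Matrix (Fin r) (Fin r) ℂ)) := by
      rw [hS, hP, Matrix.fromBlocks_smul, Matrix.fromBlocks_add, Matrix.fromBlocks_multiply]
      congr 1
      · simp [smul_add, smul_smul, pow_two]
      · simp
      · simp
      · simp
    have h2 := congrArg Matrix.det h
    rw [Matrix.det_mul, Matrix.det_fromBlocks_zero₁₂, Matrix.det_fromBlocks_zero₂₁,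
      Matrix.det_smul, Matrix.det_smul] at h2
    simpa using h2
  have main0 : ∀ z : ℂ, z ≠ 0 → z ^ (n - r) * (S z).det = (-1 : ℂ) ^ r * (P z).det := by
    intro z hz
    have h := key z
    have e : z ^ n = z ^ (n - r) * z ^ r := by rw [← pow_add, Nat.sub_add_cancel hrn]
    rw [e, neg_pow] at h
    apply mul_right_cancel₀ (pow_ne_zero r hz)
    linear_combination h
  have main : ∀ z : ℂ, z ^ (n - r) * (S z).det = (-1 : ℂ) ^ r * (P z).det := by
    have hSc : Continuous S := by
      rw [funext hS]; fun_prop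
    have hPc : Continuous P := by
      rw [funext hP]; fun_prop
    have h := Continuous.ext_on (dense_compl_singleton (0 : ℂ))
      (f := fun z => z ^ (n - r) * (S z).det) (g := fun z => (-1 : ℂ) ^ r * (P z).det)
      ((continuous_id.pow _).mul hSc.matrix_det) (continuous_const.mul hPc.matrix_det)
      (fun z hz => main0 z hz)
    exact fun z => congrFun h z
  refine ⟨main, ?_⟩
  ext z
  simp only [Set.mem_diff, Set.mem_setOf_eq, Set.mem_singleton_iff]
  refine and_congr_left fun hz => ?_
  have h := main z
  constructor
  · intro h0
    rw [h0, mul_zero] at h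
    exact (mul_eq_zero.mp h.symm).resolve_left (pow_ne_zero _ (by norm_num))
  · intro h0
    rw [h0, mul_zero] at h
    exact (mul_eq_zero.mp h).resolve_left (pow_ne_zero _ hz)
end

section
/- For every nonzero λ₀ ∈ ℂ, the linear map sending u ∈ ℂ^n to the vector (λ₀u, G*u) ∈ ℂ^{n+r} restricts to a linear isomorphism from the nullspace of P(λ₀) onto the nullspace of S(λ₀). In particular, for every nonzero λ₀ the geometric multiplicities of λ₀ as an eigenvalue of P and of S coincide. -/
open Matrix ComplexOrder

/-- For every nonzero `λ₀`, the map `u ↦ (λ₀ u, G* u)` restricts to a linear isomorphism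
from the nullspace of `P(λ₀)` onto the nullspace of `S(λ₀)`; in particular the geometric
multiplicities coincide. -/
theorem stmt1 {n r : ℕ} (hn : 0 < n) (hr : 0 < r) (hrn : r ≤ n)
    (M D : Matrix (Fin n) (Fin n) ℂ) (hM : M.PosDef) (hD : D.PosSemidef)
    (G : Matrix (Fin n) (Fin r) ℂ) (hG : G.rank = r)
    (P : ℂ → Matrix (Fin n) (Fin n) ℂ)
    (hP : ∀ z : ℂ, P z = z ^ 2 • M + z • D + G * Gᴴ)
    (S : ℂ → Matrix (Fin n ⊕ Fin r) (Fin n ⊕ Fin r) ℂ)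
    (hS : ∀ z : ℂ, S z = z • Matrix.fromBlocks M 0 0 (-1) + Matrix.fromBlocks D G Gᴴ 0) :
    ∀ lam : ℂ, lam ≠ 0 →
      (∃ e : LinearMap.ker (P lam).mulVecLin ≃ₗ[ℂ] LinearMap.ker (S lam).mulVecLin,
        ∀ u : LinearMap.ker (P lam).mulVecLin,
          (e u : Fin n ⊕ Fin r → ℂ) =
            Sum.elim (lam • (u : Fin n → ℂ)) (Gᴴ.mulVec (u : Fin n → ℂ))) ∧
      Module.finrank ℂ (LinearMap.ker (P lam).mulVecLin) =
        Module.finrank ℂ (LinearMap.ker (S lam).mulVecLin) := by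
  intro lam hlam
  have key : ∀ (x : Fin n → ℂ) (y : Fin r → ℂ), S lam *ᵥ Sum.elim x y =
      Sum.elim (lam • (M *ᵥ x) + D *ᵥ x + G *ᵥ y) (Gᴴ *ᵥ x - lam • y) := by
    intro x y
    rw [hS, add_mulVec, smul_mulVec, fromBlocks_mulVec, fromBlocks_mulVec]
    ext (i | i)
    · simp [add_assoc]
    · simp [neg_mulVec]
      ring
  have hPv : ∀ u : Fin n → ℂ, P lam *ᵥ u =
      lam • (M *ᵥ (lam • u)) + D *ᵥ (lam • u) + G *ᵥ (Gᴴ *ᵥ u) := by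
    intro u
    rw [hP, add_mulVec, add_mulVec, smul_mulVec, smul_mulVec, mulVec_smul, mulVec_smul,
      smul_smul, mulVec_mulVec, sq]
  have hSP : ∀ u : Fin n → ℂ, S lam *ᵥ Sum.elim (lam • u) (Gᴴ *ᵥ u) =
      Sum.elim (P lam *ᵥ u) 0 := by
    intro u
    rw [key, hPv, mulVec_smul Gᴴ, sub_self]
  let f : (Fin n → ℂ) →ₗ[ℂ] (Fin n ⊕ Fin r → ℂ) :=
    { toFun := fun u => Sum.elim (lam • u) (Gᴴ *ᵥ u)
      map_add' := by
        intro u v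
        ext (i | i) <;> simp [mulVec_add, mul_add]
      map_smul' := by
        intro c u
        ext (i | i)
        · simp [mul_left_comm]
        · simp [mulVec_smul] }
  have hf : ∀ u, f u = Sum.elim (lam • u) (Gᴴ *ᵥ u) := fun u => rfl
  have hmaps : ∀ u ∈ LinearMap.ker (P lam).mulVecLin,
      f u ∈ LinearMap.ker (S lam).mulVecLin := by
    intro u hu
    rw [LinearMap.mem_ker, mulVecLin_apply] at hu ⊢
    rw [hf, hSP, hu]
    ext (i | i) <;> rfl
  have hbij : Function.Bijective (f.restrict hmaps) := by
    constructor
    · intro u v huv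
      have h := congrArg Subtype.val huv
      simp only [LinearMap.restrict_coe_apply, hf] at h
      ext i
      have hi := congrFun h (Sum.inl i)
      simpa [hlam] using hi
    · rintro ⟨w, hw⟩
      rw [LinearMap.mem_ker, mulVecLin_apply] at hw
      have hw' : Sum.elim (lam • (lam⁻¹ • (w ∘ Sum.inl))) (Gᴴ *ᵥ (lam⁻¹ • (w ∘ Sum.inl))) = w := by
        have h := key (w ∘ Sum.inl) (w ∘ Sum.inr)
        rw [Sum.elim_comp_inl_inr, hw] at h
        ext (i | i)
        · simp [hlam]
        · have hi := congrFun h (Sum.inr i)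
          simp only [Pi.zero_apply, Sum.elim_inr, Pi.sub_apply, Pi.smul_apply, smul_eq_mul,
            Function.comp_apply] at hi
          rw [Sum.elim_inr, mulVec_smul, Pi.smul_apply, smul_eq_mul, sub_eq_zero.mp hi.symm,
            inv_mul_cancel_left₀ hlam]
      refine ⟨⟨lam⁻¹ • (w ∘ Sum.inl), ?_⟩, Subtype.ext hw'⟩
      have h := hSP (lam⁻¹ • (w ∘ Sum.inl))
      rw [hw', hw] at h
      rw [LinearMap.mem_ker, mulVecLin_apply]
      ext i
      exact (congrFun h (Sum.inl i)).symm
  exact ⟨⟨LinearEquiv.ofBijective _ hbij, fun u => rfl⟩,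
    (LinearEquiv.ofBijective _ hbij).finrank_eq⟩
end

section
/- If D is invertible, then the matrix S(0) = [[D, G], [G*, 0]] is singular if and only if G*D⁻¹G is singular. In particular, if D is positive definite then 0 is not an eigenvalue of the pencil S(λ), so Λ(S) = Λ(P) \ {0}. -/
open Matrix ComplexOrder

/-- If `D` is invertible then `S(0) = [[D, G], [G*, 0]]` is singular iff `G* D⁻¹ G` is
singular; in particular if `D` is positive definite then `0` is not an eigenvalue of the
pencil `S(λ)`, so `Λ(S) = Λ(P) \ {0}`. -/
theorem stmt2 {n r : ℕ} (hn : 0 < n) (hr : 0 < r) (hrn : r ≤ n)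
    (M D : Matrix (Fin n) (Fin n) ℂ) (hM : M.PosDef) (hDH : D.IsHermitian)
    (hDinv : IsUnit D.det)
    (G : Matrix (Fin n) (Fin r) ℂ) (hG : G.rank = r)
    (P : ℂ → Matrix (Fin n) (Fin n) ℂ)
    (hP : ∀ z : ℂ, P z = z ^ 2 • M + z • D + G * Gᴴ)
    (S : ℂ → Matrix (Fin n ⊕ Fin r) (Fin n ⊕ Fin r) ℂ)
    (hS : ∀ z : ℂ, S z = z • Matrix.fromBlocks M 0 0 (-1) + Matrix.fromBlocks D G Gᴴ 0) :
    ((Matrix.fromBlocks D G Gᴴ 0).det = 0 ↔ (Gᴴ * D⁻¹ * G).det = 0) ∧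
    (D.PosDef →
      (S 0).det ≠ 0 ∧ {z : ℂ | (S z).det = 0} = {z : ℂ | (P z).det = 0} \ {0}) := by
  have key : (Matrix.fromBlocks D G Gᴴ 0).det = 0 ↔ (Gᴴ * D⁻¹ * G).det = 0 := by
    letI : Invertible D := Matrix.invertibleOfIsUnitDet D hDinv
    rw [Matrix.det_fromBlocks₁₁, Matrix.invOf_eq_nonsing_inv, zero_sub, Matrix.det_neg]
    simp [hDinv.ne_zero]
  refine ⟨key, fun hD => ?_⟩
  have hinj : Function.Injective G.mulVec := by
    have h1 := LinearMap.finrank_range_add_finrank_ker G.mulVecLin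
    have h2 : Module.finrank ℂ (LinearMap.range G.mulVecLin) = r := hG
    rw [h2, Module.finrank_fin_fun] at h1
    have h3 : Module.finrank ℂ (LinearMap.ker G.mulVecLin) = 0 := by omega
    have h4 := Submodule.finrank_eq_zero.mp h3
    exact LinearMap.ker_eq_bot.mp h4
  have hS0 : (S 0).det ≠ 0 := by
    rw [hS, zero_smul, zero_add]
    intro h
    exact (hD.inv.conjTranspose_mul_mul_same hinj).det_pos.ne' (key.mp h)
  refine ⟨hS0, ?_⟩
  ext z
  simp only [Set.mem_setOf_eq, Set.mem_diff, Set.mem_singleton_iff]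
  by_cases hz : z = 0
  · subst hz
    simp [hS0]
  have hdet : IsUnit (-(z • (1 : Matrix (Fin r) (Fin r) ℂ))).det := by
    rw [Matrix.det_neg, Matrix.det_smul]
    simp [hz]
  have hinv : (-(z • (1 : Matrix (Fin r) (Fin r) ℂ)))⁻¹ = -(z⁻¹ • 1) := by
    apply Matrix.inv_eq_right_inv
    simp [smul_smul, hz]
  have hSz : S z = Matrix.fromBlocks (z • M + D) G Gᴴ (-(z • 1)) := by
    rw [hS, Matrix.fromBlocks_smul, Matrix.fromBlocks_add]
    simp
  have hPz : P z = z • (z • M + D - G * (-(z⁻¹ • (1 : Matrix (Fin r) (Fin r) ℂ))) * Gᴴ) := by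
    rw [hP]
    simp [smul_smul, hz, smul_sub, pow_two]
  letI := Matrix.invertibleOfIsUnitDet _ hdet
  rw [hSz, hPz, Matrix.det_fromBlocks₂₂, Matrix.invOf_eq_nonsing_inv, hinv, Matrix.det_smul]
  simp only [mul_eq_zero, hdet.ne_zero, false_or, pow_eq_zero_iff', hz, false_and,
    not_false_eq_true, and_true]
end

section
/- Suppose D is positive definite. Then the quadratic polynomial P(λ) is hyperbolic, i.e., there exists μ₀ ∈ ℝ with −P(μ₀) positive definite, if and only if S(λ) is a definite pencil, i.e., there exists μ₁ ∈ ℝ with S(μ₁) positive definite. Moreover, every real μ with −P(μ) positive definite satisfies μ < 0, and every real μ with S(μ) positive definite satisfies μ < 0. -/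
open Matrix ComplexOrder

lemma posDef_fromBlocks_schur {n r : ℕ} (A : Matrix (Fin n) (Fin n) ℂ) (B : Matrix (Fin n) (Fin r) ℂ)
    {D : Matrix (Fin r) (Fin r) ℂ} (hD : D.PosDef) :
    (fromBlocks A B Bᴴ D).PosDef ↔ (A - B * D⁻¹ * Bᴴ).PosDef := by
  have hu := hD.isUnit
  let _ := hu.invertible
  have h1 := Matrix.PosDef.fromBlocks₂₂ A B hD
  have h2 := Matrix.isUnit_fromBlocks_iff_of_invertible₂₂ (A := A) (B := B) (C := Bᴴ) (D := D)
  rw [invOf_eq_nonsing_inv] at h2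
  constructor
  · intro h
    exact (h1.1 h.posSemidef).posDef_iff_isUnit.2 (h2.1 h.isUnit)
  · intro h
    exact (h1.2 h.posSemidef).posDef_iff_isUnit.2 (h2.2 h.isUnit)

theorem stmt10 {n r : ℕ} (hn : 0 < n) (hr : 0 < r) (hrn : r ≤ n)
    (M D : Matrix (Fin n) (Fin n) ℂ) (hM : M.PosDef) (hD : D.PosDef)
    (G : Matrix (Fin n) (Fin r) ℂ) (hG : G.rank = r)
    (P : ℂ → Matrix (Fin n) (Fin n) ℂ)
    (hP : ∀ z : ℂ, P z = z ^ 2 • M + z • D + G * Gᴴ)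
    (S : ℂ → Matrix (Fin n ⊕ Fin r) (Fin n ⊕ Fin r) ℂ)
    (hS : ∀ z : ℂ, S z = z • Matrix.fromBlocks M 0 0 (-1) + Matrix.fromBlocks D G Gᴴ 0) :
    ((∃ μ : ℝ, (-(P (μ : ℂ))).PosDef) ↔ (∃ μ : ℝ, (S (μ : ℂ)).PosDef)) ∧
    (∀ μ : ℝ, (-(P (μ : ℂ))).PosDef → μ < 0) ∧
    (∀ μ : ℝ, (S (μ : ℂ)).PosDef → μ < 0) := by
  have hPneg : ∀ μ : ℝ, (-(P (μ : ℂ))).PosDef → μ < 0 := by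
    intro μ h
    by_contra hμ
    push Not at hμ
    have hc : (0 : ℂ) ≤ (μ : ℂ) := by exact_mod_cast hμ
    have hps : (P (μ : ℂ)).PosSemidef := by
      rw [hP]
      exact ((hM.posSemidef.smul (pow_nonneg hc 2)).add (hD.posSemidef.smul hc)).add
        (posSemidef_self_mul_conjTranspose G)
    have h1 := h.diag_pos (i := ⟨0, hn⟩)
    have h2 := hps.diag_nonneg (i := ⟨0, hn⟩)
    rw [Matrix.neg_apply] at h1
    exact absurd (neg_pos.1 h1) (not_lt_of_ge h2)
  have hSneg : ∀ μ : ℝ, (S (μ : ℂ)).PosDef → μ < 0 := by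
    intro μ h
    have h1 := h.diag_pos (i := Sum.inr ⟨0, hr⟩)
    rw [hS] at h1
    simp at h1
    exact_mod_cast h1
  have key : ∀ μ : ℝ, μ < 0 → ((-(P (μ : ℂ))).PosDef ↔ (S (μ : ℂ)).PosDef) := by
    intro μ hμ
    have hc : (0 : ℂ) < -(μ : ℂ) := by
      have : (0:ℝ) < -μ := by linarith
      exact_mod_cast this
    have hne : (μ : ℂ) ≠ 0 := by exact_mod_cast hμ.ne
    have hSe : S (μ : ℂ) = fromBlocks ((μ : ℂ) • M + D) G Gᴴ ((-(μ : ℂ)) • 1) := by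
      rw [hS, fromBlocks_smul, fromBlocks_add]
      simp
    have hinv : ((-(μ : ℂ)) • (1 : Matrix (Fin r) (Fin r) ℂ))⁻¹ = (-(μ : ℂ))⁻¹ • 1 := by
      apply Matrix.inv_eq_right_inv
      rw [smul_mul_smul_comm, mul_one, mul_inv_cancel₀ (neg_ne_zero.2 hne), one_smul]
    have hPe : -(P (μ : ℂ)) = (-(μ : ℂ)) •
        (((μ : ℂ) • M + D) - G * ((-(μ : ℂ)) • (1 : Matrix (Fin r) (Fin r) ℂ))⁻¹ * Gᴴ) := by
      rw [hinv, hP]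
      ext i j
      simp
      field_simp
      ring
    have h1 : ((-(μ : ℂ)) • (1 : Matrix (Fin r) (Fin r) ℂ)).PosDef := Matrix.PosDef.one.smul hc
    rw [hSe, posDef_fromBlocks_schur _ _ h1, hPe]
    constructor
    · intro h
      have := h.smul (inv_pos.2 hc)
      rwa [smul_smul, inv_mul_cancel₀ hc.ne', one_smul] at this
    · intro h
      exact h.smul hc
  refine ⟨⟨?_, ?_⟩, hPneg, hSneg⟩
  · rintro ⟨μ, h⟩
    exact ⟨μ, (key μ (hPneg μ h)).1 h⟩
  · rintro ⟨μ, h⟩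
    exact ⟨μ, (key μ (hSneg μ h)).2 h⟩
end

section
/- Suppose D is positive definite and let μ be a nonzero real number. Write ı₊(A) and ı₋(A) for the number of positive, respectively negative, eigenvalues (counted with multiplicity) of a Hermitian matrix A. If μ > 0 then ı₊(S(μ)) = ı₊(P(μ)) and ı₋(S(μ)) = ı₋(P(μ)) + r; if μ < 0 then ı₊(S(μ)) = ı₋(P(μ)) + r and ı₋(S(μ)) = ı₊(P(μ)). -/
open Matrix ComplexOrder

/-- The number of eigenvalues (roots of the characteristic polynomial, counted with algebraic
multiplicity) with positive real part.  For a Hermitian matrix this is the number `ı₊` of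
positive eigenvalues counted with multiplicity. -/
noncomputable def posInertia {m : Type*} [Fintype m] [DecidableEq m]
    (A : Matrix m m ℂ) : ℕ :=
  (A.charpoly.roots.filter fun z => 0 < z.re).card

/-- The number of eigenvalues (roots of the characteristic polynomial, counted with algebraic
multiplicity) with negative real part.  For a Hermitian matrix this is the number `ı₋` of
negative eigenvalues counted with multiplicity. -/
noncomputable def negInertia {m : Type*} [Fintype m] [DecidableEq m]
    (A : Matrix m m ℂ) : ℕ :=
  (A.charpoly.roots.filter fun z => z.re < 0).card

theorem inertia_of_diag {m : Type*} [Fintype m] [DecidableEq m]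
    (A U : Matrix m m ℂ) (a : m → ℝ) (hU : Uᴴ * U = 1)
    (hA : A = U * diagonal (fun i => (a i : ℂ)) * Uᴴ) :
    posInertia A = Fintype.card {i // 0 < a i} ∧
    negInertia A = Fintype.card {i // a i < 0} := by
  have hc : A.charpoly.roots = Multiset.map (fun i => (a i : ℂ)) Finset.univ.val := by
    rw [hA, charpoly_mul_comm, ← mul_assoc, hU, one_mul, charpoly_diagonal,
      Polynomial.roots_prod]
    · simp
    · simp [Finset.prod_ne_zero_iff, Polynomial.X_sub_C_ne_zero]
  unfold posInertia negInertia
  rw [hc, Multiset.filter_map, Multiset.filter_map, Multiset.card_map, Multiset.card_map,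
    Fintype.card_subtype, Fintype.card_subtype]
  constructor <;> rfl

theorem exists_diag {m : Type*} [Fintype m] [DecidableEq m]
    (A : Matrix m m ℂ) (hA : A.IsHermitian) :
    ∃ (U : Matrix m m ℂ) (a : m → ℝ), Uᴴ * U = 1 ∧
      A = U * diagonal (fun i => (a i : ℂ)) * Uᴴ := by
  refine ⟨hA.eigenvectorUnitary, hA.eigenvalues, ?_, ?_⟩
  · exact Unitary.coe_star_mul_self hA.eigenvectorUnitary
  · have := hA.spectral_theorem
    rw [Unitary.conjStarAlgAut_apply] at this
    exact this

theorem negInertia_eq {m : Type*} [Fintype m] [DecidableEq m]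
    (A : Matrix m m ℂ) (hA : A.IsHermitian) :
    negInertia A = posInertia (-A) ∧ posInertia A = negInertia (-A) := by
  obtain ⟨U, a, hU, h⟩ := exists_diag A hA
  have h2 := inertia_of_diag (-A) U (fun i => - a i) hU (by
    rw [h]
    have : diagonal (fun i => ((-a i : ℝ) : ℂ)) = - diagonal (fun i => (a i : ℂ)) := by
      ext i j
      by_cases hij : i = j <;> simp [hij, diagonal_apply]
    rw [this, mul_neg, neg_mul])
  have h1 := inertia_of_diag A U a hU h
  rw [h1.1, h1.2, h2.1, h2.2]
  simp

theorem quad_diag {m : Type*} [Fintype m] [DecidableEq m] (a : m → ℝ) (x : m → ℂ) :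
    star x ⬝ᵥ (diagonal (fun i => (a i : ℂ)) *ᵥ x) = ((∑ i, a i * ‖x i‖ ^ 2 : ℝ) : ℂ) := by
  simp only [dotProduct, mulVec_diagonal]
  push_cast
  refine Finset.sum_congr rfl fun i _ => ?_
  have := Complex.conj_mul' (x i)
  simp only [Pi.star_apply, RCLike.star_def]
  rw [← this]; ring

theorem card_le_of_diag {m k : Type*} [Fintype m] [DecidableEq m] [Fintype k] [DecidableEq k]
    (a : m → ℝ) (b : k → ℝ) (E : Matrix k m ℂ)
    (h : diagonal (fun i => (b i : ℂ)) = E * diagonal (fun i => (a i : ℂ)) * Eᴴ) :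
    Fintype.card {i // 0 < b i} ≤ Fintype.card {i // 0 < a i} := by
  let ext : ({i // 0 < b i} → ℂ) →ₗ[ℂ] (k → ℂ) :=
    { toFun := fun x i => if hi : 0 < b i then x ⟨i, hi⟩ else 0
      map_add' := by intro x y; ext i; by_cases hi : 0 < b i <;> simp [hi]
      map_smul' := by intro c x; ext i; by_cases hi : 0 < b i <;> simp [hi] }
  let f : ({i // 0 < b i} → ℂ) →ₗ[ℂ] ({i // 0 < a i} → ℂ) :=
    (LinearMap.funLeft ℂ ℂ Subtype.val) ∘ₗ (Matrix.mulVecLin Eᴴ) ∘ₗ ext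
  have hf : Function.Injective f := by
    rw [injective_iff_map_eq_zero]
    intro x hx
    have key : ∑ i, b i * ‖ext x i‖ ^ 2 = ∑ i, a i * ‖(Eᴴ *ᵥ ext x) i‖ ^ 2 := by
      have h1 := quad_diag b (ext x)
      have h2 := quad_diag a (Eᴴ *ᵥ ext x)
      rw [h, ← mulVec_mulVec, ← mulVec_mulVec, dotProduct_mulVec] at h1
      rw [star_mulVec, conjTranspose_conjTranspose] at h2
      exact_mod_cast h1.symm.trans h2
    have hle : ∑ i, a i * ‖(Eᴴ *ᵥ ext x) i‖ ^ 2 ≤ 0 := by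
      refine Finset.sum_nonpos fun i _ => ?_
      by_cases hi : 0 < a i
      · have : (Eᴴ *ᵥ ext x) i = 0 := congrFun hx ⟨i, hi⟩
        simp [this]
      · exact mul_nonpos_of_nonpos_of_nonneg (not_lt.mp hi) (by positivity)
    have hnn : ∀ i ∈ Finset.univ, 0 ≤ b i * ‖ext x i‖ ^ 2 := by
      intro i _
      by_cases hi : 0 < b i
      · positivity
      · have : ext x i = 0 := dif_neg hi
        simp [this]
    have h0 := (Finset.sum_eq_zero_iff_of_nonneg hnn).1
      (le_antisymm (key.trans_le hle) (Finset.sum_nonneg hnn))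
    funext ⟨i, hi⟩
    have hz := h0 i (Finset.mem_univ i)
    have hxi : ext x i = x ⟨i, hi⟩ := dif_pos hi
    rw [hxi] at hz
    simpa [hi.ne'] using hz
  simpa using LinearMap.finrank_le_finrank_of_injective hf

theorem posInertia_le {m : Type*} [Fintype m] [DecidableEq m]
    (A B E : Matrix m m ℂ) (hA : A.IsHermitian) (hB : B.IsHermitian)
    (h : B = E * A * Eᴴ) : posInertia B ≤ posInertia A := by
  obtain ⟨U, a, hU, h1⟩ := exists_diag A hA
  obtain ⟨V, b, hV, h2⟩ := exists_diag B hB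
  rw [(inertia_of_diag A U a hU h1).1, (inertia_of_diag B V b hV h2).1]
  refine card_le_of_diag a b (Vᴴ * E * U) ?_
  have h3 : diagonal (fun i => (b i : ℂ)) = Vᴴ * B * V := by
    rw [h2]
    simp only [← mul_assoc, hV, one_mul]
    rw [mul_assoc, hV, mul_one]
  rw [h3, h, h1]
  simp only [conjTranspose_mul, conjTranspose_conjTranspose, mul_assoc]

theorem inertia_congr {m : Type*} [Fintype m] [DecidableEq m]
    (A B E F : Matrix m m ℂ) (hA : A.IsHermitian) (hFE : F * E = 1)
    (h : B = E * A * Eᴴ) : posInertia A = posInertia B ∧ negInertia A = negInertia B := by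
  have hB : B.IsHermitian := by
    rw [h]; exact isHermitian_mul_mul_conjTranspose E hA
  have hAB : A = F * B * Fᴴ := by
    have h4 : Eᴴ * Fᴴ = 1 := by rw [← conjTranspose_mul, hFE, conjTranspose_one]
    rw [h]
    simp only [← mul_assoc, hFE, one_mul]
    rw [mul_assoc, h4, mul_one]
  refine ⟨le_antisymm (posInertia_le B A F hB hA hAB) (posInertia_le A B E hA hB h), ?_⟩
  rw [(negInertia_eq A hA).1, (negInertia_eq B hB).1]
  exact le_antisymm (posInertia_le (-B) (-A) F hB.neg hA.neg (by rw [hAB]; simp))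
    (posInertia_le (-A) (-B) E hA.neg hB.neg (by rw [h]; simp))

theorem inertia_blocks {m k : Type*} [Fintype m] [DecidableEq m] [Fintype k] [DecidableEq k]
    (A : Matrix m m ℂ) (B : Matrix k k ℂ) :
    posInertia (fromBlocks A 0 0 B) = posInertia A + posInertia B ∧
    negInertia (fromBlocks A 0 0 B) = negInertia A + negInertia B := by
  unfold posInertia negInertia
  rw [charpoly_fromBlocks_zero₁₂, Polynomial.roots_mul
    (mul_ne_zero (charpoly_monic A).ne_zero (charpoly_monic B).ne_zero)]
  simp

theorem inertia_one (r : ℕ) :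
    posInertia (1 : Matrix (Fin r) (Fin r) ℂ) = r ∧
    negInertia (1 : Matrix (Fin r) (Fin r) ℂ) = 0 := by
  have := inertia_of_diag (1 : Matrix (Fin r) (Fin r) ℂ) 1 (fun _ => 1) (by simp) (by simp)
  rw [this.1, this.2]
  constructor
  · simp
  · rw [Fintype.card_eq_zero_iff]
    exact ⟨fun x => absurd x.2 (by norm_num)⟩

theorem inertia_neg_one (r : ℕ) :
    posInertia (-1 : Matrix (Fin r) (Fin r) ℂ) = 0 ∧
    negInertia (-1 : Matrix (Fin r) (Fin r) ℂ) = r := by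
  have h := negInertia_eq (1 : Matrix (Fin r) (Fin r) ℂ) isHermitian_one
  exact ⟨by rw [← h.1, (inertia_one r).2], by rw [← h.2, (inertia_one r).1]⟩

theorem schur_congr {n r : ℕ}
    (M D : Matrix (Fin n) (Fin n) ℂ) (hM : M.IsHermitian) (hD : D.IsHermitian)
    (G : Matrix (Fin n) (Fin r) ℂ) (μ c s : ℝ) (hμ : μ ≠ 0) (hc : c ≠ 0)
    (hcs : c * c = s * μ) (hs : s * s = 1)
    (S : Matrix (Fin n ⊕ Fin r) (Fin n ⊕ Fin r) ℂ)
    (hS : S = (μ : ℂ) • Matrix.fromBlocks M 0 0 (-1) + Matrix.fromBlocks D G Gᴴ 0)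
    (B : Matrix (Fin n ⊕ Fin r) (Fin n ⊕ Fin r) ℂ)
    (hB : B = fromBlocks ((s : ℂ) • ((μ : ℂ) ^ 2 • M + (μ : ℂ) • D + G * Gᴴ)) 0 0
      ((-s : ℂ) • 1)) :
    posInertia S = posInertia B ∧ negInertia S = negInertia B := by
  have hμ' : (μ : ℂ) ≠ 0 := by exact_mod_cast hμ
  have hc' : (c : ℂ) ≠ 0 := by exact_mod_cast hc
  have hcs' : (c : ℂ) * c = s * μ := by exact_mod_cast hcs
  have hs' : (s : ℂ) * s = 1 := by exact_mod_cast hs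
  have hSb : S = fromBlocks ((μ : ℂ) • M + D) G Gᴴ (-(μ : ℂ) • 1) := by
    rw [hS, fromBlocks_smul, fromBlocks_add]; simp
  have hSH : S.IsHermitian := by
    rw [hSb]
    refine IsHermitian.fromBlocks ?_ rfl ?_
    · simp [IsHermitian, hM.eq, hD.eq]
    · simp [IsHermitian]
  refine inertia_congr S B
    (fromBlocks ((c : ℂ) • 1) ((c / μ : ℂ) • G) 0 ((c : ℂ)⁻¹ • 1))
    (fromBlocks ((c : ℂ)⁻¹ • 1) (-(c / μ : ℂ) • G) 0 ((c : ℂ) • 1)) hSH ?_ ?_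
  · rw [fromBlocks_multiply, ← fromBlocks_one]
    simp only [Matrix.smul_mul, Matrix.mul_smul, Matrix.one_mul, Matrix.mul_one,
      Matrix.zero_mul, Matrix.mul_zero, smul_zero, zero_add, add_zero, smul_smul]
    congr 1
    · rw [mul_inv_cancel₀ hc', one_smul]
    · module
    · rw [inv_mul_cancel₀ hc', one_smul]
  · rw [hSb, hB, fromBlocks_conjTranspose, fromBlocks_multiply, fromBlocks_multiply]
    have e1 : (c : ℂ) / μ * μ = c := by field_simp
    have e3 : (c : ℂ) * (c / μ) = s := by rw [← mul_div_assoc, hcs']; field_simp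
    have e2 : (c : ℂ)⁻¹ * ((c : ℂ)⁻¹ * μ) = s := by
      have : (μ : ℂ) = s * (c * c) := by rw [hcs', ← mul_assoc, hs', one_mul]
      rw [this]; field_simp
    have e4 : (c : ℂ) * (c : ℂ)⁻¹ = 1 := mul_inv_cancel₀ hc'
    have hst : star ((c : ℂ) / μ) = c / μ := by simp
    have hst2 : star (c : ℂ) = c := by simp
    have hst3 : star (c : ℂ)⁻¹ = (c : ℂ)⁻¹ := by simp
    simp only [conjTranspose_smul, conjTranspose_one, conjTranspose_zero, hst, hst2, hst3,
      Matrix.add_mul, Matrix.smul_mul, Matrix.mul_smul, Matrix.one_mul, Matrix.mul_one,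
      Matrix.zero_mul, Matrix.mul_zero, smul_zero, zero_add, add_zero]
    generalize (c : ℂ) / μ = t at *
    generalize (c : ℂ)⁻¹ = d at *
    congr 1
    · match_scalars
      · linear_combination (-(μ : ℂ)) * hcs'
      · linear_combination -hcs'
      · linear_combination -e3 + t * e1
    · match_scalars
      linear_combination d * e1
    · match_scalars
      linear_combination d * e1
    · match_scalars
      linear_combination e2

/-- For `D` positive definite and nonzero real `μ`:
if `μ > 0` then `ı₊(S(μ)) = ı₊(P(μ))` and `ı₋(S(μ)) = ı₋(P(μ)) + r`; if `μ < 0` then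
`ı₊(S(μ)) = ı₋(P(μ)) + r` and `ı₋(S(μ)) = ı₊(P(μ))`. -/
theorem stmt11 {n r : ℕ} (hn : 0 < n) (hr : 0 < r) (hrn : r ≤ n)
    (M D : Matrix (Fin n) (Fin n) ℂ) (hM : M.PosDef) (hD : D.PosDef)
    (G : Matrix (Fin n) (Fin r) ℂ) (hG : G.rank = r)
    (P : ℂ → Matrix (Fin n) (Fin n) ℂ)
    (hP : ∀ z : ℂ, P z = z ^ 2 • M + z • D + G * Gᴴ)
    (S : ℂ → Matrix (Fin n ⊕ Fin r) (Fin n ⊕ Fin r) ℂ)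
    (hS : ∀ z : ℂ, S z = z • Matrix.fromBlocks M 0 0 (-1) + Matrix.fromBlocks D G Gᴴ 0)
    (μ : ℝ) (hμ : μ ≠ 0) :
    (0 < μ →
      posInertia (S (μ : ℂ)) = posInertia (P (μ : ℂ)) ∧
      negInertia (S (μ : ℂ)) = negInertia (P (μ : ℂ)) + r) ∧
    (μ < 0 →
      posInertia (S (μ : ℂ)) = negInertia (P (μ : ℂ)) + r ∧
      negInertia (S (μ : ℂ)) = posInertia (P (μ : ℂ))) := by
  have hPH : (P μ).IsHermitian := by
    rw [hP]
    simp [IsHermitian, hM.isHermitian.eq, hD.isHermitian.eq]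
  constructor
  · intro h
    have hsq : √μ ≠ 0 := (Real.sqrt_pos.2 h).ne'
    have := schur_congr M D hM.isHermitian hD.isHermitian G μ (√μ) 1 hμ hsq
      (by rw [Real.mul_self_sqrt h.le]; ring) (by norm_num) (S μ) (hS μ) _ rfl
    rw [this.1, this.2, ← hP, (inertia_blocks _ _).1, (inertia_blocks _ _).2]
    have h1 : ((-(1 : ℝ) : ℂ) • (1 : Matrix (Fin r) (Fin r) ℂ)) = -1 := by simp
    rw [h1, (inertia_neg_one r).1, (inertia_neg_one r).2]
    simp
  · intro h
    have hsq : √(-μ) ≠ 0 := (Real.sqrt_pos.2 (neg_pos.2 h)).ne'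
    have := schur_congr M D hM.isHermitian hD.isHermitian G μ (√(-μ)) (-1) hμ hsq
      (by rw [Real.mul_self_sqrt (neg_pos.2 h).le]; ring) (by norm_num) (S μ) (hS μ) _ rfl
    rw [this.1, this.2, ← hP, (inertia_blocks _ _).1, (inertia_blocks _ _).2]
    have h1 : ((-((-1 : ℝ) : ℂ)) • (1 : Matrix (Fin r) (Fin r) ℂ)) = 1 := by simp
    rw [h1, (inertia_one r).1, (inertia_one r).2, (negInertia_eq _ hPH).1,
      (negInertia_eq _ hPH).2]
    simp
end

section
/- Let ω be a nonzero real number, suppose iω is an eigenvalue of P with geometric multiplicity p ≥ 1, and let Q₂ ∈ ℂ^{n×p} satisfy Q₂*Q₂ = I_p with the columns of Q₂ spanning the nullspace of P(iω). Let T ∈ ℂ^{p×p} be Hermitian positive definite and, for t > 0, define P̂ₜ(λ) := P(λ) + λ·t·MQ₂TQ₂*M. Then for every t > 0: neither iω nor −iω is an eigenvalue of P̂ₜ; every eigenvalue of P other than iω and −iω is an eigenvalue of P̂ₜ; and every eigenvalue of P̂ₜ either is an eigenvalue of P different from ±iω or has strictly negative real part. -/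
open Matrix ComplexOrder

lemma aux_null {n : ℕ} (M D K : Matrix (Fin n) (Fin n) ℂ)
    (hM : M.PosDef) (hD : D.PosSemidef) (hK : K.PosSemidef) (s : ℝ) (hs : s ≠ 0)
    (x : Fin n → ℂ)
    (h : (((s : ℂ) * Complex.I) ^ 2 • M + ((s : ℂ) * Complex.I) • D + K) *ᵥ x = 0) :
    D *ᵥ x = 0 ∧ K *ᵥ x = ((s : ℂ) ^ 2) • (M *ᵥ x) := by
  have h1 := congrArg (fun v => star x ⬝ᵥ v) h
  simp only [add_mulVec, smul_mulVec, dotProduct_add, dotProduct_smul, dotProduct_zero,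
    smul_eq_mul] at h1
  have m0 := hM.posSemidef.dotProduct_mulVec_nonneg x
  have d0 := hD.dotProduct_mulVec_nonneg x
  have k0 := hK.dotProduct_mulVec_nonneg x
  have hI : ((s : ℂ) * Complex.I) ^ 2 = -((s : ℂ) ^ 2) := by
    rw [mul_pow, Complex.I_sq]; ring
  have hD0 : D *ᵥ x = 0 := by
    rw [← hD.dotProduct_mulVec_zero_iff]
    rw [Complex.le_def] at m0 d0 k0
    rw [hI, ← Complex.ofReal_pow] at h1
    have him := congrArg Complex.im h1
    rw [Complex.add_im, Complex.add_im, ← Complex.ofReal_neg, Complex.im_ofReal_mul] at him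
    simp [← m0.2, ← k0.2, ← d0.2, hs] at him
    exact Complex.ext him d0.2.symm
  refine ⟨hD0, ?_⟩
  simp only [add_mulVec, smul_mulVec, hD0, hI, smul_zero, add_zero] at h
  rw [neg_smul] at h
  exact (neg_add_eq_zero.mp h).symm

lemma aux_quad (z : ℂ) (a b c : ℝ) (ha : 0 < a) (hb : 0 < b) (hc : 0 < c)
    (h : (a : ℂ) * z ^ 2 + b * z + c = 0) : z.re < 0 := by
  have hr := congrArg Complex.re h
  have hi := congrArg Complex.im h
  simp [pow_two] at hr hi
  by_contra hn
  push Not at hn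
  have h1 : z.im * (2 * a * z.re + b) = 0 := by linarith
  rcases mul_eq_zero.mp h1 with h2 | h2
  · rw [h2] at hr
    have := mul_nonneg ha.le (mul_nonneg hn hn)
    have := mul_nonneg hb.le hn
    linarith
  · have := mul_nonneg ha.le hn
    linarith

/-- Removing the purely imaginary eigenvalue pair `±iω` by the rank-`p` damping
`t · M Q₂ T Q₂* M`: for all `t > 0` neither `iω` nor `−iω` is an eigenvalue of `P̂ₜ`,
every eigenvalue of `P` other than `±iω` is an eigenvalue of `P̂ₜ`, and every eigenvalue of
`P̂ₜ` either is an eigenvalue of `P` different from `±iω` or has negative real part. -/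
theorem stmt14 {n p : ℕ}
    (M D K : Matrix (Fin n) (Fin n) ℂ)
    (hM : M.PosDef) (hD : D.PosSemidef) (hK : K.PosSemidef)
    (P : ℂ → Matrix (Fin n) (Fin n) ℂ)
    (hP : ∀ z : ℂ, P z = z ^ 2 • M + z • D + K)
    (ω : ℝ) (hω : ω ≠ 0) (hp : 1 ≤ p)
    (hgeo : Module.finrank ℂ
      (LinearMap.ker (P ((ω : ℂ) * Complex.I)).mulVecLin) = p)
    (Q₂ : Matrix (Fin n) (Fin p) ℂ) (hQorth : Q₂ᴴ * Q₂ = 1)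
    (hQspan : ∀ x : Fin n → ℂ,
      (P ((ω : ℂ) * Complex.I)).mulVec x = 0 ↔ ∃ y : Fin p → ℂ, x = Q₂.mulVec y)
    (T : Matrix (Fin p) (Fin p) ℂ) (hT : T.PosDef)
    (Ph : ℝ → ℂ → Matrix (Fin n) (Fin n) ℂ)
    (hPh : ∀ (t : ℝ) (z : ℂ), Ph t z = P z + (z * (t : ℂ)) • (M * Q₂ * T * Q₂ᴴ * M)) :
    ∀ t : ℝ, 0 < t →
      ((Ph t ((ω : ℂ) * Complex.I)).det ≠ 0 ∧
        (Ph t (-((ω : ℂ) * Complex.I))).det ≠ 0) ∧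
      (∀ z : ℂ, (P z).det = 0 → z ≠ (ω : ℂ) * Complex.I →
        z ≠ -((ω : ℂ) * Complex.I) → (Ph t z).det = 0) ∧
      (∀ z : ℂ, (Ph t z).det = 0 →
        ((P z).det = 0 ∧ z ≠ (ω : ℂ) * Complex.I ∧ z ≠ -((ω : ℂ) * Complex.I)) ∨
          z.re < 0) := by
  intro t ht
  have hQ0 : ∀ y, D *ᵥ (Q₂ *ᵥ y) = 0 ∧ K *ᵥ (Q₂ *ᵥ y) = ((ω : ℂ) ^ 2) • (M *ᵥ (Q₂ *ᵥ y)) := by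
    intro y
    have h := (hQspan (Q₂ *ᵥ y)).2 ⟨y, rfl⟩
    rw [hP] at h
    exact aux_null M D K hM hD hK ω hω _ h
  have hDQ : D * Q₂ = 0 := by
    apply Matrix.ext_of_mulVec_single
    intro i
    rw [← mulVec_mulVec, (hQ0 _).1, zero_mulVec]
  have hKQ : K * Q₂ = ((ω : ℂ) ^ 2) • (M * Q₂) := by
    apply Matrix.ext_of_mulVec_single
    intro i
    rw [← mulVec_mulVec, (hQ0 _).2, smul_mulVec, mulVec_mulVec]
  have hQD : Q₂ᴴ * D = 0 := by
    have := congrArg conjTranspose hDQ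
    simpa [conjTranspose_mul, hD.isHermitian.eq] using this
  have hQK : Q₂ᴴ * K = ((ω : ℂ) ^ 2) • (Q₂ᴴ * M) := by
    have := congrArg conjTranspose hKQ
    simpa [conjTranspose_mul, hK.isHermitian.eq, hM.isHermitian.eq] using this
  have hQP : ∀ z, Q₂ᴴ * P z = (z ^ 2 + (ω : ℂ) ^ 2) • (Q₂ᴴ * M) := by
    intro z
    rw [hP, Matrix.mul_add, Matrix.mul_add, Matrix.mul_smul, Matrix.mul_smul, hQD, hQK, smul_zero, add_zero,
      add_smul]
  have hQinj : ∀ y, Q₂ *ᵥ y = 0 → y = 0 := by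
    intro y hy
    have := congrArg (fun v => Q₂ᴴ *ᵥ v) hy
    simpa [mulVec_mulVec, hQorth] using this
  have hSpos : ∀ y, y ≠ 0 → 0 < star y ⬝ᵥ ((Q₂ᴴ * M * Q₂) *ᵥ y) := by
    intro y hy
    have := hM.dotProduct_mulVec_pos (x := Q₂ *ᵥ y) (fun h => hy (hQinj y h))
    rw [star_mulVec, ← dotProduct_mulVec, mulVec_mulVec, mulVec_mulVec] at this
    simpa only [Matrix.mul_assoc] using this
  have hPhx : ∀ z x, Ph t z *ᵥ x
      = P z *ᵥ x + (z * (t : ℂ)) • ((M * Q₂ * T) *ᵥ ((Q₂ᴴ * M) *ᵥ x)) := by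
    intro z x
    rw [hPh, add_mulVec, smul_mulVec, mulVec_mulVec]
    simp only [Matrix.mul_assoc]
  have hW : ∀ z x, Ph t z *ᵥ x = 0 → 0 ≤ z.re → (Q₂ᴴ * M) *ᵥ x = 0 := by
    intro z x hx hz
    by_contra hw
    have h1 := congrArg (fun v => Q₂ᴴ *ᵥ v) (hPhx z x)
    simp only [hx, mulVec_zero, mulVec_add, mulVec_smul] at h1
    rw [mulVec_mulVec, hQP, smul_mulVec] at h1
    set w := (Q₂ᴴ * M) *ᵥ x with hwdef
    have hTw : T *ᵥ w ≠ 0 := by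
      intro h0
      have := hT.dotProduct_mulVec_pos hw
      rw [h0, dotProduct_zero] at this
      exact lt_irrefl _ this
    have e : Q₂ᴴ *ᵥ ((M * Q₂ * T) *ᵥ w) = (Q₂ᴴ * M * Q₂) *ᵥ (T *ᵥ w) := by
      simp only [mulVec_mulVec, Matrix.mul_assoc]
    rw [e] at h1
    have h2 := congrArg (fun v => star (T *ᵥ w) ⬝ᵥ v) h1
    simp only [dotProduct_zero, dotProduct_add, dotProduct_smul, smul_eq_mul] at h2
    have hb := hSpos _ hTw
    have ha := hT.dotProduct_mulVec_pos hw
    have e2 : star (T *ᵥ w) ⬝ᵥ w = star w ⬝ᵥ (T *ᵥ w) := by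
      rw [star_mulVec, ← dotProduct_mulVec, hT.isHermitian.eq]
    rw [e2] at h2
    generalize star w ⬝ᵥ (T *ᵥ w) = a at ha h2
    generalize star (T *ᵥ w) ⬝ᵥ ((Q₂ᴴ * M * Q₂) *ᵥ (T *ᵥ w)) = b at hb h2
    rw [Complex.lt_def] at ha hb
    have ea : a = (a.re : ℂ) := Complex.ext rfl (by simpa using ha.2.symm)
    have eb : b = (b.re : ℂ) := Complex.ext rfl (by simpa using hb.2.symm)
    have ha1 : 0 < a.re := ha.1
    have hb1 : 0 < b.re := hb.1
    have := aux_quad z a.re (t * b.re) (ω ^ 2 * a.re) ha1 (by positivity) (by positivity) (by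
      push_cast
      rw [← ea, ← eb]
      linear_combination -h2)
    linarith
  have hmain : ∀ z x, Ph t z *ᵥ x = 0 → 0 ≤ z.re → P z *ᵥ x = 0 := by
    intro z x hx hz
    have h := hPhx z x
    rw [hW z x hx hz, hx, mulVec_zero, smul_zero, add_zero] at h
    exact h.symm
  have hno : ∀ s : ℝ, s ^ 2 = ω ^ 2 → (Ph t ((s : ℂ) * Complex.I)).det ≠ 0 := by
    intro s hs hdet
    obtain ⟨x, hx0, hx⟩ := exists_mulVec_eq_zero_iff.2 hdet
    have hre : 0 ≤ ((s : ℂ) * Complex.I).re := by simp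
    have hs0 : s ≠ 0 := by
      rintro rfl
      exact hω (by simpa using hs.symm)
    have h1 := hmain _ x hx hre
    rw [hP] at h1
    obtain ⟨hd, hk⟩ := aux_null M D K hM hD hK s hs0 x h1
    have hsc : (s : ℂ) ^ 2 = (ω : ℂ) ^ 2 := by exact_mod_cast hs
    have h2 : P ((ω : ℂ) * Complex.I) *ᵥ x = 0 := by
      rw [hP, add_mulVec, add_mulVec, smul_mulVec, smul_mulVec, hd, hk, hsc, mul_pow,
        Complex.I_sq]
      simp
    obtain ⟨y, rfl⟩ := (hQspan x).1 h2
    have hy : y ≠ 0 := by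
      rintro rfl
      simp at hx0
    have h3 := hSpos y hy
    rw [← mulVec_mulVec, hW _ _ hx hre, dotProduct_zero] at h3
    exact lt_irrefl _ h3
  have hno1 := hno ω rfl
  have hno2 : (Ph t (-((ω : ℂ) * Complex.I))).det ≠ 0 := by
    have := hno (-ω) (by ring)
    simpa using this
  refine ⟨⟨hno1, hno2⟩, ?_, ?_⟩
  · intro z hz h1 h2
    obtain ⟨x, hx0, hx⟩ := exists_mulVec_eq_zero_iff.2 hz
    refine exists_mulVec_eq_zero_iff.1 ⟨x, hx0, ?_⟩
    have h3 := congrArg (fun A => A *ᵥ x) (hQP z)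
    simp only [← mulVec_mulVec, smul_mulVec, hx, mulVec_zero] at h3
    have hne : z ^ 2 + (ω : ℂ) ^ 2 ≠ 0 := by
      have : z ^ 2 + (ω : ℂ) ^ 2 = (z - ω * Complex.I) * (z - -(ω * Complex.I)) := by
        linear_combination (ω : ℂ) ^ 2 * Complex.I_sq
      rw [this]
      exact mul_ne_zero (sub_ne_zero.2 h1) (sub_ne_zero.2 h2)
    have h4 := (smul_eq_zero.1 h3.symm).resolve_left hne
    rw [mulVec_mulVec] at h4
    rw [hPhx, hx, h4, mulVec_zero, smul_zero, add_zero]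
  · intro z hz
    by_cases hre : z.re < 0
    · exact Or.inr hre
    · left
      obtain ⟨x, hx0, hx⟩ := exists_mulVec_eq_zero_iff.2 hz
      refine ⟨exists_mulVec_eq_zero_iff.1 ⟨x, hx0, hmain z x hx (not_lt.1 hre)⟩, ?_, ?_⟩
      · rintro rfl
        exact hno1 hz
      · rintro rfl
        exact hno2 hz
end

section
/- Let ω be a nonzero real number, suppose iω is an eigenvalue of P with geometric multiplicity p ≥ 1, and let W ∈ ℂ^{n×m} have rank m with m < p. Then for every t > 0, both iω and −iω are eigenvalues of the damped polynomial P̂ₜ(λ) := P(λ) + λ·t·WW*. -/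
open Matrix ComplexOrder

/-- If `iω` is an eigenvalue of `P` with geometric multiplicity `p ≥ 1` and `W` has rank
`m < p`, then for every `t > 0` both `iω` and `−iω` remain eigenvalues of
`P̂ₜ(λ) = P(λ) + λ t W W*`. -/
theorem stmt15 {n p m : ℕ}
    (M D K : Matrix (Fin n) (Fin n) ℂ)
    (hM : M.PosDef) (hD : D.PosSemidef) (hK : K.PosSemidef)
    (P : ℂ → Matrix (Fin n) (Fin n) ℂ)
    (hP : ∀ z : ℂ, P z = z ^ 2 • M + z • D + K)
    (ω : ℝ) (hω : ω ≠ 0) (hp : 1 ≤ p)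
    (hgeo : Module.finrank ℂ
      (LinearMap.ker (P ((ω : ℂ) * Complex.I)).mulVecLin) = p)
    (W : Matrix (Fin n) (Fin m) ℂ) (hW : W.rank = m) (hmp : m < p)
    (Ph : ℝ → ℂ → Matrix (Fin n) (Fin n) ℂ)
    (hPh : ∀ (t : ℝ) (z : ℂ), Ph t z = P z + (z * (t : ℂ)) • (W * Wᴴ)) :
    ∀ t : ℝ, 0 < t →
      (Ph t ((ω : ℂ) * Complex.I)).det = 0 ∧
      (Ph t (-((ω : ℂ) * Complex.I))).det = 0 := by
  intro t ht
  have hex : ∃ v : Fin n → ℂ, v ≠ 0 ∧ (P ((ω : ℂ) * Complex.I)) *ᵥ v = 0 ∧ Wᴴ *ᵥ v = 0 := by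
    have h := LinearMap.ker_ne_bot_of_finrank_lt
      (f := (Wᴴ).mulVecLin.domRestrict (LinearMap.ker (P ((ω : ℂ) * Complex.I)).mulVecLin))
      (by rw [hgeo]; simpa using hmp)
    obtain ⟨x, hx, hx0⟩ := (Submodule.ne_bot_iff _).1 h
    refine ⟨x.1, fun h0 => hx0 (Subtype.ext h0), ?_, ?_⟩
    · exact LinearMap.mem_ker.1 x.2
    · simpa using hx
  obtain ⟨v, hv, h1, h2⟩ := hex
  have hdet : (Ph t ((ω : ℂ) * Complex.I)).det = 0 := by
    rw [← Matrix.exists_mulVec_eq_zero_iff]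
    refine ⟨v, hv, ?_⟩
    rw [hPh, Matrix.add_mulVec, h1, Matrix.smul_mulVec, ← Matrix.mulVec_mulVec, h2]
    simp
  refine ⟨hdet, ?_⟩
  have hH : Ph t (-((ω : ℂ) * Complex.I)) = (Ph t ((ω : ℂ) * Complex.I))ᴴ := by
    simp only [hPh, hP, Matrix.conjTranspose_add, Matrix.conjTranspose_smul,
      Matrix.conjTranspose_mul, Matrix.conjTranspose_conjTranspose,
      hM.isHermitian.eq, hD.isHermitian.eq, hK.isHermitian.eq]
    simp
  rw [hH, Matrix.det_conjTranspose, hdet, star_zero]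
end

section
/- Let M, K ∈ ℂ^{n×n} be Hermitian positive definite and let X ∈ ℂ^{n×n} satisfy X*MX = I_n and X*KX = diag(ω₁², …, ωₙ²) where ω₁, …, ωₙ are pairwise distinct positive real numbers (so that all eigenvalues ±iω_j of P₀(λ) := λ²M + K are simple). Let u ∈ ℂ^n have all coordinates nonzero and set v := MXu. Then for every t > 0, every eigenvalue z of Pₜ(λ) := λ²M + λ·t·vv* + K satisfies Re z < 0. -/
open Matrix ComplexOrder

/-- If all eigenvalues of `P₀(λ) = λ²M + K` are simple (distinct positive frequencies
`ω₁, …, ωₙ`), then the rank-one damping `t v v*` with `v = M X u`, all coordinates of `u`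
nonzero, moves all eigenvalues into the open left half-plane: every eigenvalue `z` of
`Pₜ(λ) = λ²M + λ t v v* + K` satisfies `Re z < 0` for every `t > 0`. -/
theorem stmt16 {n : ℕ}
    (M K : Matrix (Fin n) (Fin n) ℂ) (hM : M.PosDef) (hK : K.PosDef)
    (X : Matrix (Fin n) (Fin n) ℂ) (ω : Fin n → ℝ)
    (hXM : Xᴴ * M * X = 1)
    (hXK : Xᴴ * K * X = Matrix.diagonal fun i => ((ω i : ℂ)) ^ 2)
    (hωpos : ∀ i, 0 < ω i) (hωinj : Function.Injective ω)
    (u : Fin n → ℂ) (hu : ∀ i, u i ≠ 0)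
    (v : Fin n → ℂ) (hv : v = M.mulVec (X.mulVec u))
    (Pt : ℝ → ℂ → Matrix (Fin n) (Fin n) ℂ)
    (hPt : ∀ (t : ℝ) (z : ℂ),
      Pt t z = z ^ 2 • M + (z * (t : ℂ)) • Matrix.vecMulVec v (star v) + K) :
    ∀ t : ℝ, 0 < t → ∀ z : ℂ, (Pt t z).det = 0 → z.re < 0 := by
  intro t ht z hdet
  have hQ : Xᴴ * Pt t z * X = z ^ 2 • (1 : Matrix (Fin n) (Fin n) ℂ)
      + (z * (t : ℂ)) • Matrix.vecMulVec u (star u)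
      + Matrix.diagonal fun i => ((ω i : ℂ)) ^ 2 := by
    have h1 : Xᴴ *ᵥ v = u := by
      rw [hv, Matrix.mulVec_mulVec, Matrix.mulVec_mulVec, hXM,
        Matrix.one_mulVec]
    have h2 : star v ᵥ* X = star u := by
      rw [← h1, Matrix.star_mulVec, Matrix.conjTranspose_conjTranspose]
    rw [hPt, Matrix.mul_add, Matrix.mul_add, Matrix.add_mul, Matrix.add_mul, hXK,
      Matrix.mul_smul, Matrix.smul_mul, hXM, Matrix.mul_smul, Matrix.smul_mul,
      Matrix.mul_vecMulVec, Matrix.vecMulVec_mul, h1, h2]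
  have hQdet : (Xᴴ * Pt t z * X).det = 0 := by
    rw [Matrix.det_mul, Matrix.det_mul, hdet]; simp
  obtain ⟨y, hy0, hy⟩ := Matrix.exists_mulVec_eq_zero_iff.mpr hQdet
  rw [hQ] at hy
  obtain ⟨s, hs⟩ : ∃ s : ℂ, s = star u ⬝ᵥ y := ⟨_, rfl⟩
  have hi : ∀ i, z ^ 2 * y i + z * t * (u i * s) + (ω i : ℂ) ^ 2 * y i = 0 := by
    intro i
    have := congrFun hy i
    simp only [Matrix.add_mulVec, Matrix.smul_mulVec, Matrix.one_mulVec,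
      Matrix.vecMulVec_mulVec, Matrix.mulVec_diagonal, Pi.add_apply, Pi.smul_apply, ← hs,
      smul_eq_mul, Pi.zero_apply, MulOpposite.smul_eq_mul_unop, MulOpposite.unop_op] at this
    exact this
  have hyex : ∃ i, y i ≠ 0 := by
    by_contra h
    push Not at h
    exact hy0 (funext h)
  obtain ⟨k, hk⟩ := hyex
  have hs0 : s ≠ 0 := by
    intro h0
    have hz : ∀ i, y i ≠ 0 → z ^ 2 = -(ω i : ℂ) ^ 2 := by
      intro i h
      have := hi i
      rw [h0] at this
      have h3 : (z ^ 2 + (ω i : ℂ) ^ 2) * y i = 0 := by linear_combination this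
      rcases mul_eq_zero.mp h3 with h4 | h4
      · linear_combination h4
      · exact absurd h4 h
    have huniq : ∀ i, i ≠ k → y i = 0 := by
      intro i hik
      by_contra h
      have h5 : (ω i : ℂ) ^ 2 = (ω k : ℂ) ^ 2 := by
        linear_combination hz i h - hz k hk
      have h6 : (ω i) ^ 2 = (ω k) ^ 2 := by exact_mod_cast h5
      exact hik (hωinj ((sq_eq_sq₀ (hωpos i).le (hωpos k).le).mp h6))
    have : s = star (u k) * y k := by
      rw [hs, dotProduct, Finset.sum_eq_single k]
      · rfl
      · intro i _ hik
        rw [huniq i hik, mul_zero]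
      · simp
    rw [h0] at this
    exact mul_ne_zero (star_ne_zero.mpr (hu k)) hk this.symm
  obtain ⟨A, hA⟩ : ∃ A : ℝ, A = ∑ i, Complex.normSq (y i) := ⟨_, rfl⟩
  obtain ⟨B, hB⟩ : ∃ B : ℝ, B = ∑ i, (ω i) ^ 2 * Complex.normSq (y i) := ⟨_, rfl⟩
  obtain ⟨c, hc⟩ : ∃ c : ℝ, c = t * Complex.normSq s := ⟨_, rfl⟩
  have hApos : 0 < A := by
    rw [hA]
    exact Finset.sum_pos' (fun i _ => Complex.normSq_nonneg _)
      ⟨k, Finset.mem_univ _, Complex.normSq_pos.mpr hk⟩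
  have hBpos : 0 < B := by
    rw [hB]
    exact Finset.sum_pos' (fun i _ => mul_nonneg (sq_nonneg _) (Complex.normSq_nonneg _))
      ⟨k, Finset.mem_univ _, mul_pos (pow_pos (hωpos k) 2) (Complex.normSq_pos.mpr hk)⟩
  have hcpos : 0 < c := by
    rw [hc]
    exact mul_pos ht (Complex.normSq_pos.mpr hs0)
  have hquad : z ^ 2 * (A : ℂ) + z * c + B = 0 := by
    have hstar : star s = ∑ i, u i * star (y i) := by
      rw [hs, dotProduct, star_sum]
      refine Finset.sum_congr rfl fun i _ => ?_
      simp
    have hcs : (c : ℂ) = ∑ i, (t : ℂ) * s * (u i * star (y i)) := by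
      rw [← Finset.mul_sum, ← hstar, hc]
      push_cast
      rw [← Complex.mul_conj]
      simp only [Complex.star_def]
      ring
    rw [hcs, hA, hB]
    push_cast
    rw [Finset.mul_sum, Finset.mul_sum, ← Finset.sum_add_distrib, ← Finset.sum_add_distrib]
    refine Finset.sum_eq_zero fun i _ => ?_
    rw [← Complex.mul_conj]
    simp only [Complex.star_def]
    linear_combination (starRingEnd ℂ (y i)) * hi i
  have hre := congrArg Complex.re hquad
  have him := congrArg Complex.im hquad
  simp [pow_two] at hre him
  by_contra hneg
  push Not at hneg
  have hb : z.im * (2 * z.re * A + c) = 0 := by linear_combination him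
  rcases mul_eq_zero.mp hb with h | h
  · rw [h] at hre
    nlinarith [mul_nonneg (mul_nonneg hneg hneg) hApos.le, mul_nonneg hneg hcpos.le]
  · nlinarith [mul_nonneg hneg hApos.le]
end

section
/- Let ω be a nonzero real number, suppose iω is an eigenvalue of P with geometric multiplicity p ≥ 1, and let Q₂ ∈ ℂ^{n×p} satisfy Q₂*Q₂ = I_p with the columns of Q₂ spanning the nullspace of P(iω). Let T ∈ ℂ^{p×p} be Hermitian positive definite. Then for every t > 0, neither iω nor −iω is an eigenvalue of the damped polynomial P̂ₜ(λ) := P(λ) + λ·t·Q₂TQ₂*. -/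
open Matrix ComplexOrder

lemma aux_herm {n : ℕ} (A : Matrix (Fin n) (Fin n) ℂ) (hA : A.IsHermitian) (x : Fin n → ℂ) :
    (star x ⬝ᵥ (A *ᵥ x)).im = 0 := by
  have := hA.im_star_dotProduct_mulVec_self x
  simpa using this

lemma aux_main {n p : ℕ}
    (M D K : Matrix (Fin n) (Fin n) ℂ)
    (hM : M.PosDef) (hD : D.PosSemidef) (hK : K.PosSemidef)
    (ω : ℝ)
    (Q : Matrix (Fin n) (Fin p) ℂ) (hQ : Qᴴ * Q = 1)
    (hspan : ∀ x : Fin n → ℂ,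
      ((((ω : ℂ) * Complex.I) ^ 2 • M + ((ω : ℂ) * Complex.I) • D + K)).mulVec x = 0 →
        ∃ y : Fin p → ℂ, x = Q.mulVec y)
    (T : Matrix (Fin p) (Fin p) ℂ) (hT : T.PosDef) (t : ℝ) (ht : 0 < t)
    (c : ℝ) (hc : c ≠ 0) (hcω : c ^ 2 = ω ^ 2) (z : ℂ) (hz : z = (c : ℂ) * Complex.I) :
    (z ^ 2 • M + z • D + K + (z * (t : ℂ)) • (Q * T * Qᴴ)).det ≠ 0 := by
  intro hdet
  obtain ⟨x, hx0, hx⟩ := Matrix.exists_mulVec_eq_zero_iff.mpr hdet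
  have hz2 : z ^ 2 = -((ω : ℂ) ^ 2) := by
    rw [hz, mul_pow, Complex.I_sq]
    have : (c : ℂ) ^ 2 = (ω : ℂ) ^ 2 := by exact_mod_cast hcω
    rw [this]; ring
  have hw2 : ((ω : ℂ) * Complex.I) ^ 2 = -((ω : ℂ) ^ 2) := by
    rw [mul_pow, Complex.I_sq]; ring
  have hQT : star x ⬝ᵥ ((Q * T * Qᴴ) *ᵥ x) = star (Qᴴ *ᵥ x) ⬝ᵥ (T *ᵥ (Qᴴ *ᵥ x)) := by
    rw [star_mulVec, conjTranspose_conjTranspose, ← dotProduct_mulVec, mulVec_mulVec, mulVec_mulVec,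
      Matrix.mul_assoc]
  have h := congrArg (fun v => (star x ⬝ᵥ v).im) hx
  simp only [add_mulVec, smul_mulVec, dotProduct_add, dotProduct_smul, hQT, hz2,
    dotProduct_zero, Complex.add_im, smul_eq_mul] at h
  have h1 := aux_herm M hM.1 x
  have h2 := aux_herm K hK.1 x
  have h3 := hD.dotProduct_mulVec_nonneg x
  have h4 := hT.posSemidef.dotProduct_mulVec_nonneg (Qᴴ *ᵥ x)
  rw [Complex.nonneg_iff] at h3 h4
  have hw : (-((ω : ℂ) ^ 2)) = ((-(ω ^ 2) : ℝ) : ℂ) := by push_cast; rfl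
  rw [hw, Complex.im_ofReal_mul, h1, h2, hz] at h
  have h5 : c * ((star x ⬝ᵥ (D *ᵥ x)).re
      + t * (star (Qᴴ *ᵥ x) ⬝ᵥ (T *ᵥ (Qᴴ *ᵥ x))).re) = 0 := by
    simp [Complex.mul_im, Complex.mul_re, -mulVec_mulVec] at h
    linarith
  have h6 := (mul_eq_zero.mp h5).resolve_left hc
  have h7 := mul_nonneg ht.le h4.1
  have hD0 : (star x ⬝ᵥ (D *ᵥ x)).re = 0 := by linarith [h3.1]
  have hT0 : (star (Qᴴ *ᵥ x) ⬝ᵥ (T *ᵥ (Qᴴ *ᵥ x))).re = 0 := by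
    have : t * (star (Qᴴ *ᵥ x) ⬝ᵥ (T *ᵥ (Qᴴ *ᵥ x))).re = 0 := by linarith [h3.1]
    exact (mul_eq_zero.mp this).resolve_left ht.ne'
  have hDx : D *ᵥ x = 0 := (hD.dotProduct_mulVec_zero_iff x).mp (Complex.ext hD0 h3.2.symm)
  have hQx : Qᴴ *ᵥ x = 0 := by
    by_contra hne
    have := hT.dotProduct_mulVec_pos hne
    rw [Complex.pos_iff] at this
    linarith [this.1]
  have hQQ : (Q * T * Qᴴ) *ᵥ x = 0 := by rw [← mulVec_mulVec, hQx, mulVec_zero]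
  obtain ⟨y, hy⟩ := hspan x (by
    simp only [add_mulVec, smul_mulVec, hDx, hQQ, hz2, hw2, smul_zero, add_zero] at hx ⊢
    exact hx)
  have hy0 : y = 0 := by
    rw [hy, mulVec_mulVec, hQ, one_mulVec] at hQx
    exact hQx
  exact hx0 (by rw [hy, hy0, mulVec_zero])

/-- If `iω` is an eigenvalue of `P` with geometric multiplicity `p ≥ 1`, `Q₂` has orthonormal
columns spanning the nullspace of `P(iω)`, and `T > 0`, then for every `t > 0` neither `iω`
nor `−iω` is an eigenvalue of `P̂ₜ(λ) = P(λ) + λ t Q₂ T Q₂*`. -/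
theorem stmt17 {n p : ℕ}
    (M D K : Matrix (Fin n) (Fin n) ℂ)
    (hM : M.PosDef) (hD : D.PosSemidef) (hK : K.PosSemidef)
    (P : ℂ → Matrix (Fin n) (Fin n) ℂ)
    (hP : ∀ z : ℂ, P z = z ^ 2 • M + z • D + K)
    (ω : ℝ) (hω : ω ≠ 0) (hp : 1 ≤ p)
    (hgeo : Module.finrank ℂ
      (LinearMap.ker (P ((ω : ℂ) * Complex.I)).mulVecLin) = p)
    (Q₂ : Matrix (Fin n) (Fin p) ℂ) (hQorth : Q₂ᴴ * Q₂ = 1)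
    (hQspan : ∀ x : Fin n → ℂ,
      (P ((ω : ℂ) * Complex.I)).mulVec x = 0 ↔ ∃ y : Fin p → ℂ, x = Q₂.mulVec y)
    (T : Matrix (Fin p) (Fin p) ℂ) (hT : T.PosDef)
    (Ph : ℝ → ℂ → Matrix (Fin n) (Fin n) ℂ)
    (hPh : ∀ (t : ℝ) (z : ℂ), Ph t z = P z + (z * (t : ℂ)) • (Q₂ * T * Q₂ᴴ)) :
    ∀ t : ℝ, 0 < t →
      (Ph t ((ω : ℂ) * Complex.I)).det ≠ 0 ∧
      (Ph t (-((ω : ℂ) * Complex.I))).det ≠ 0 := by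
  intro t ht
  have hs := fun x h => (hQspan x).mp h
  simp only [hP] at hs
  rw [hPh, hPh, hP, hP]
  exact ⟨aux_main M D K hM hD hK ω Q₂ hQorth hs T hT t ht ω hω rfl _ rfl,
    aux_main M D K hM hD hK ω Q₂ hQorth hs T hT t ht (-ω) (neg_ne_zero.mpr hω) (by ring) _
      (by push_cast; ring)⟩
end
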